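/- Let A = [[a,c],[b,d]] be an invertible 2×2 quaternionic matrix and define T(q) = (q·conj(c) + conj(d))⁻¹ · q · (q·conj(c) + conj(d)). Then for every q ∈ ℍ at which the real quadratic |c|²q² + 2Re(c·conj(d))q + |d|² is nonzero, one has ℱ_A(q) = F_A(T(q)), i.e. ℱ_A(q) = (T(q)c + d)⁻¹(T(q)a + b). (The regular fractional transformation is the composition of the linear fractional transformation with the quaternionic conjugation map T.) -/

import Mathlib

open Quaternion Matrix

/-- The real quadratic denominator `|c|²q² + 2Re(c·conj d)q + |d|²` of the regular
fractional transformation associated to `[[a,c],[b,d]]`. -/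
noncomputable def regDenom (c d q : ℍ[ℝ]) : ℍ[ℝ] :=
  ((‖c‖ ^ 2 : ℝ) : ℍ[ℝ]) * q ^ 2 + ((2 * (c * star d).re : ℝ) : ℍ[ℝ]) * q + ((‖d‖ ^ 2 : ℝ) : ℍ[ℝ])

/-- The regular fractional transformation `ℱ_A(q) = (qc+d)^{-*} * (qa+b)` associated to
`A = [[a,c],[b,d]]`, in explicit form. -/
noncomputable def regFT (a c b d q : ℍ[ℝ]) : ℍ[ℝ] :=
  (regDenom c d q)⁻¹ *
    (q ^ 2 * (star c * a) + q * (star d * a + star c * b) + star d * b)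

/-! Regular multiplication by `f(q) = qu + v` is ordinary multiplication up to a conjugation of the
variable: `(f * g)(q) = f(q) g(f(q)⁻¹ q f(q))` wherever `f(q) ≠ 0`. For `f(q) = q·conj(c) + conj(d)`
the conjugation is `T`, while the numerator and the denominator of `ℱ_A` are the regular products
of `f` with `qa + b` and with `qc + d`, so the common left factor `f(q)` cancels in the quotient. -/

section LinearRegularProduct

/-- The value at `q` of the regular product `(qu + v) * (qa + b)`: the two polynomials are
multiplied as if the variable commuted with the coefficients, which are kept on its right. -/
def linearRegMul {K : Type*} [Semiring K] (u v a b q : K) : K :=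
  q ^ 2 * (u * a) + q * (v * a + u * b) + v * b

theorem linearRegMul_eq_mul_add_mul {K : Type*} [Semiring K] (u v a b q : K) :
    linearRegMul u v a b q = q * (q * u + v) * a + (q * u + v) * b := by
  simp only [linearRegMul, pow_two, mul_add, add_mul, mul_assoc]
  abel

variable {K : Type*} [DivisionSemiring K] {u v q : K}

theorem linearRegMul_eq_mul_of_ne_zero (a b : K) (hp : q * u + v ≠ 0) :
    linearRegMul u v a b q =
      (q * u + v) * (((q * u + v)⁻¹ * q * (q * u + v)) * a + b) := by
  rw [linearRegMul_eq_mul_add_mul]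
  generalize q * u + v = p at hp ⊢
  simp only [mul_add, mul_assoc, mul_inv_cancel_left₀ hp]

theorem ne_zero_of_linearRegMul_ne_zero {a b : K} (h : linearRegMul u v a b q ≠ 0) :
    q * u + v ≠ 0 := by
  contrapose! h
  rw [linearRegMul_eq_mul_add_mul, h, mul_zero, zero_mul, zero_mul, add_zero]

theorem regular_fractional_eq_linear_comp_general {c d : K} (a b : K)
    (hq : linearRegMul u v c d q ≠ 0) :
    (linearRegMul u v c d q)⁻¹ * linearRegMul u v a b q =
      (((q * u + v)⁻¹ * q * (q * u + v)) * c + d)⁻¹ *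
        (((q * u + v)⁻¹ * q * (q * u + v)) * a + b) := by
  have hp : q * u + v ≠ 0 := ne_zero_of_linearRegMul_ne_zero hq
  rw [linearRegMul_eq_mul_of_ne_zero c d hp, linearRegMul_eq_mul_of_ne_zero a b hp,
    _root_.mul_inv_rev, mul_assoc, inv_mul_cancel_left₀ hp]

end LinearRegularProduct

theorem coe_norm_sq_eq_star_mul_self (x : ℍ[ℝ]) : ((‖x‖ ^ 2 : ℝ) : ℍ[ℝ]) = star x * x := by
  rw [Quaternion.star_mul_self, Quaternion.normSq_eq_norm_mul_self, pow_two]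

theorem re_mul_comm {R : Type*} [CommRing R] (x y : ℍ[R]) : (x * y).re = (y * x).re := by
  simp only [Quaternion.re_mul, mul_comm]

theorem coe_two_mul_re_mul_star {R : Type*} [CommRing R] (x y : ℍ[R]) :
    ((2 * (x * star y).re : R) : ℍ[R]) = star y * x + star x * y := by
  rw [re_mul_comm, ← Quaternion.self_add_star', star_mul, star_star]

theorem regDenom_eq_linearRegMul (c d q : ℍ[ℝ]) :
    regDenom c d q = linearRegMul (star c) (star d) c d q := by
  rw [regDenom, linearRegMul, Quaternion.coe_commutes, Quaternion.coe_commutes _ q,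
    coe_norm_sq_eq_star_mul_self, coe_norm_sq_eq_star_mul_self, coe_two_mul_re_mul_star]

theorem regFT_eq_inv_linearRegMul_mul (a c b d q : ℍ[ℝ]) :
    regFT a c b d q =
      (linearRegMul (star c) (star d) c d q)⁻¹ * linearRegMul (star c) (star d) a b q := by
  rw [regFT, regDenom_eq_linearRegMul, linearRegMul, linearRegMul]

/-- The regular fractional transformation `ℱ_A` is the composition of the linear fractional
transformation `F_A` with the quaternionic conjugation map
`T(q) = (q·conj(c) + conj(d))⁻¹ · q · (q·conj(c) + conj(d))`. -/
theorem regular_fractional_eq_linear_comp (a c b d : ℍ[ℝ]) (hA : IsUnit !![a, c; b, d])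
    (q : ℍ[ℝ]) (hq : regDenom c d q ≠ 0) :
    regFT a c b d q =
      (((q * star c + star d)⁻¹ * q * (q * star c + star d)) * c + d)⁻¹ *
        (((q * star c + star d)⁻¹ * q * (q * star c + star d)) * a + b) := by
  rw [regFT_eq_inv_linearRegMul_mul]
  exact regular_fractional_eq_linear_comp_general a b (regDenom_eq_linearRegMul c d q ▸ hq)
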